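/- The little Schröder numbers satisfy the three-term recurrence 3(2n−1)·s(n) = (n+1)·s(n+1) + (n−2)·s(n−1) for all n ≥ 2. -/

import Mathlib

/-!
The proof is by generating functions. Let `S = ∑ s(n) Xⁿ`, and let `L` be the analogous series for
ordered forests, i.e. lists of Schröder trees counted by total number of leaves. Decomposing a tree
at its root and a forest at its first tree gives `S = X + S² L` and `L = 1 + S L`
(`treeSeries_eq`, `forestSeries_eq`). Eliminating `L` yields the quadratic equation
`2 S² - (1 + X) S + X = 0`.

Its discriminant is `(4 S - 1 - X)² = 1 - 6 X + X²`. Differentiating the quadratic equation gives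
`(4 S - 1 - X) S' = S - 1`, and multiplying by `4 S - 1 - X` produces the linear differential
equation `(1 - 6 X + X²) S' = (X - 3) S + 1 - X` (`treeSeries_ode`), whose coefficient of `Xⁿ` is
the recurrence.

Since `Nat.card` of an infinite type is `0`, it also has to be shown that only finitely many
trees and forests have a given number of leaves (`finite_leaves_le`).
-/

/-- A Schröder tree: a single node, or a root with at least two ordered subtrees,
encoded as two subtrees plus a (possibly empty) list of further subtrees. -/
inductive SchTree : Type
  | leaf : SchTree
  | node : SchTree → SchTree → List SchTree → SchTree

mutual
/-- Number of leaves of a Schröder tree. -/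
def SchTree.leaves : SchTree → ℕ
  | .leaf => 1
  | .node t₁ t₂ ts => t₁.leaves + t₂.leaves + SchTree.leavesList ts
def SchTree.leavesList : List SchTree → ℕ
  | [] => 0
  | t :: ts => t.leaves + SchTree.leavesList ts
end

/-- The number of Schröder trees with `n` leaves. -/
noncomputable def schS (n : ℕ) : ℕ := Nat.card {t : SchTree // t.leaves = n}

namespace SchTree

open PowerSeries

/-- The generating function `∑ₙ #{a | w a = n} Xⁿ` of a weight function `w`. It is meaningful when
`w` has finite fibres. -/
noncomputable def weightSeries {A : Type} (w : A → ℕ) : ℤ⟦X⟧ :=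
  PowerSeries.mk fun n => (Nat.card {a // w a = n} : ℤ)

theorem weightSeries_equiv {A B : Type} (e : A ≃ B) (w : A → ℕ) (v : B → ℕ)
    (h : ∀ a, w a = v (e a)) : weightSeries w = weightSeries v := by
  ext n
  simp only [weightSeries, coeff_mk]
  congr 1
  exact Nat.card_congr (e.subtypeEquiv fun a => by rw [h])

theorem weightSeries_unit (k : ℕ) : weightSeries (fun _ : Unit => k) = X ^ k := by
  ext n
  simp only [weightSeries, coeff_mk, coeff_X_pow]
  by_cases h : n = k
  · subst h
    simp
  · have : IsEmpty {_a : Unit // k = n} := ⟨fun a => h a.2.symm⟩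
    simp [h]

theorem weightSeries_sum {A B : Type} (w : A → ℕ) (v : B → ℕ)
    (hw : ∀ n, Finite {a // w a = n}) (hv : ∀ n, Finite {b // v b = n}) :
    weightSeries (Sum.elim w v) = weightSeries w + weightSeries v := by
  ext n
  have := hw n
  have := hv n
  simp only [weightSeries, coeff_mk, map_add]
  rw [← Nat.cast_add, ← Nat.card_sum]
  congr 1
  exact Nat.card_congr (Equiv.subtypeSum (p := fun c => Sum.elim w v c = n))

/-- A pair of total weight `n` is a splitting of `n` together with a pair of elements having the
prescribed weights. -/
def fiberProdEquiv {A B : Type} (w : A → ℕ) (v : B → ℕ) (n : ℕ) :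
    {p : A × B // w p.1 + v p.2 = n} ≃
      Σ x : Finset.HasAntidiagonal.antidiagonal n, {a // w a = x.1.1} × {b // v b = x.1.2} where
  toFun p := ⟨⟨(w p.1.1, v p.1.2), by simpa using p.2⟩, ⟨p.1.1, rfl⟩, ⟨p.1.2, rfl⟩⟩
  invFun q := ⟨(q.2.1.1, q.2.2.1), by
    rw [q.2.1.2, q.2.2.2]
    exact Finset.HasAntidiagonal.mem_antidiagonal.1 q.1.2⟩
  left_inv p := rfl
  right_inv := by
    rintro ⟨⟨⟨i, j⟩, h⟩, ⟨a, ha⟩, ⟨b, hb⟩⟩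
    dsimp only at ha hb
    subst ha hb
    rfl

theorem finite_fiber_prod {A B : Type} (w : A → ℕ) (v : B → ℕ)
    (hw : ∀ n, Finite {a // w a = n}) (hv : ∀ n, Finite {b // v b = n}) (n : ℕ) :
    Finite {p : A × B // w p.1 + v p.2 = n} :=
  Finite.of_equiv _ (fiberProdEquiv w v n).symm

theorem weightSeries_prod {A B : Type} (w : A → ℕ) (v : B → ℕ)
    (hw : ∀ n, Finite {a // w a = n}) (hv : ∀ n, Finite {b // v b = n}) :
    weightSeries (fun p : A × B => w p.1 + v p.2) = weightSeries w * weightSeries v := by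
  ext n
  simp only [weightSeries, coeff_mk, coeff_mul]
  rw [Nat.card_congr (fiberProdEquiv w v n), Nat.card_sigma]
  simp only [Nat.card_prod]
  push_cast
  exact Finset.sum_coe_sort (Finset.HasAntidiagonal.antidiagonal n)
    (fun x => (Nat.card {a // w a = x.1} : ℤ) * (Nat.card {b // v b = x.2} : ℤ))

theorem leaves_pos (t : SchTree) : 0 < t.leaves := by
  induction t using SchTree.rec (motive_2 := fun _ => True) with
  | leaf => simp [leaves]
  | node t₁ t₂ ts h₁ h₂ => simp only [leaves]; omega
  | nil => trivial
  | cons => trivial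

/-- The subtrees at the root have strictly fewer leaves than the tree, and the tail of a forest has
strictly fewer leaves than the forest, so both finiteness claims follow by a joint induction. -/
theorem finite_leaves_le (n : ℕ) :
    {t : SchTree | t.leaves ≤ n}.Finite ∧ {l : List SchTree | leavesList l ≤ n}.Finite := by
  induction n with
  | zero =>
    constructor
    · convert Set.finite_empty
      ext t
      simp [(leaves_pos t).ne']
    · refine (Set.finite_singleton []).subset ?_
      rintro (_ | ⟨t, ts⟩) h
      · rfl
      · have := leaves_pos t
        simp only [Set.mem_ofPred_eq, leavesList] at h
        omega
  | succ n ih =>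
    obtain ⟨hT, hL⟩ := ih
    have hT' : {t : SchTree | t.leaves ≤ n + 1}.Finite := by
      refine ((Set.finite_singleton leaf).union
        (((hT.prod hT).prod hL).image fun p => node p.1.1 p.1.2 p.2)).subset ?_
      rintro (_ | ⟨t₁, t₂, ts⟩) h
      · exact Or.inl rfl
      · have h₁ := leaves_pos t₁
        have h₂ := leaves_pos t₂
        simp only [Set.mem_ofPred_eq, leaves] at h
        refine Or.inr ⟨((t₁, t₂), ts), ?_, rfl⟩
        simp only [Set.mem_prod, Set.mem_ofPred_eq]
        omega
    refine ⟨hT', ((Set.finite_singleton []).union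
      ((hT'.prod hL).image fun p => p.1 :: p.2)).subset ?_⟩
    rintro (_ | ⟨t, ts⟩) h
    · exact Or.inl rfl
    · have h₁ := leaves_pos t
      simp only [Set.mem_ofPred_eq, leavesList] at h
      refine Or.inr ⟨(t, ts), ?_, rfl⟩
      simp only [Set.mem_prod, Set.mem_ofPred_eq]
      omega

theorem finite_leaves (n : ℕ) : Finite {t : SchTree // t.leaves = n} :=
  ((finite_leaves_le n).1.subset fun _ h => le_of_eq h : {t : SchTree | t.leaves = n}.Finite)

theorem finite_leavesList (n : ℕ) : Finite {l : List SchTree // leavesList l = n} :=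
  ((finite_leaves_le n).2.subset fun _ h => le_of_eq h :
    {l : List SchTree | leavesList l = n}.Finite)

/-- Decomposition of a tree at its root. -/
def rootEquiv : SchTree ≃ Unit ⊕ (SchTree × SchTree) × List SchTree where
  toFun
    | leaf => .inl ()
    | node t₁ t₂ ts => .inr ((t₁, t₂), ts)
  invFun
    | .inl _ => leaf
    | .inr p => node p.1.1 p.1.2 p.2
  left_inv := by rintro (_ | _) <;> rfl
  right_inv := by rintro (_ | _) <;> rfl

/-- Decomposition of a forest into its first tree and the remaining forest. -/
def forestEquiv : List SchTree ≃ Unit ⊕ SchTree × List SchTree where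
  toFun
    | [] => .inl ()
    | t :: ts => .inr (t, ts)
  invFun
    | .inl _ => []
    | .inr p => p.1 :: p.2
  left_inv := by rintro (_ | _) <;> rfl
  right_inv := by rintro (_ | _) <;> rfl

/-- The generating function of Schröder trees by number of leaves. -/
noncomputable def treeSeries : ℤ⟦X⟧ := weightSeries leaves

/-- The generating function of ordered forests of Schröder trees by total number of leaves. -/
noncomputable def forestSeries : ℤ⟦X⟧ := weightSeries leavesList

theorem treeSeries_eq : treeSeries = X + treeSeries * treeSeries * forestSeries := by
  have hpair := finite_fiber_prod leaves leaves finite_leaves finite_leaves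
  have h := weightSeries_equiv rootEquiv leaves
    (Sum.elim (fun _ => 1) fun p => (p.1.1.leaves + p.1.2.leaves) + leavesList p.2)
    (by rintro (_ | _) <;> simp [rootEquiv, leaves])
  rw [weightSeries_sum _ _ (fun _ => inferInstance)
      (finite_fiber_prod (fun q : SchTree × SchTree => q.1.leaves + q.2.leaves) leavesList
        hpair finite_leavesList),
    weightSeries_unit, pow_one,
    weightSeries_prod (fun q : SchTree × SchTree => q.1.leaves + q.2.leaves) leavesList
      hpair finite_leavesList,
    weightSeries_prod leaves leaves finite_leaves finite_leaves] at h
  exact h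

theorem forestSeries_eq : forestSeries = 1 + treeSeries * forestSeries := by
  have h := weightSeries_equiv forestEquiv leavesList
    (Sum.elim (fun _ => 0) fun p => p.1.leaves + leavesList p.2)
    (by rintro (_ | _) <;> simp [forestEquiv, leavesList])
  rw [weightSeries_sum _ _ (fun _ => inferInstance)
      (finite_fiber_prod leaves leavesList finite_leaves finite_leavesList),
    weightSeries_unit, pow_zero,
    weightSeries_prod leaves leavesList finite_leaves finite_leavesList] at h
  exact h

theorem treeSeries_quadratic :
    2 * treeSeries ^ 2 - (1 + X) * treeSeries + X = 0 := by
  linear_combination (treeSeries - 1) * treeSeries_eq - treeSeries ^ 2 * forestSeries_eq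

theorem treeSeries_ode :
    (1 - 6 * X + X ^ 2) * d⁄dX ℤ treeSeries = (X - 3) * treeSeries + 1 - X := by
  have hq := treeSeries_quadratic
  have hd : (4 * treeSeries - 1 - X) * d⁄dX ℤ treeSeries = treeSeries - 1 := by
    have h := congrArg (d⁄dX ℤ) (show treeSeries * treeSeries + treeSeries * treeSeries + X
      = treeSeries + X * treeSeries by linear_combination hq)
    simp only [map_add, Derivation.leibniz, derivative_X, smul_eq_mul] at h
    linear_combination h
  linear_combination (4 * treeSeries - 1 - X) * hd + (2 - 8 * d⁄dX ℤ treeSeries) * hq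

theorem coeff_treeSeries (n : ℕ) : coeff n treeSeries = (schS n : ℤ) := by
  simp [treeSeries, weightSeries, schS]

theorem schS_zero : schS 0 = 0 := by
  have : IsEmpty {t : SchTree // t.leaves = 0} := ⟨fun t => (leaves_pos t.1).ne' t.2⟩
  simp [schS]

end SchTree

open SchTree PowerSeries in
/-- The little Schröder numbers satisfy `s(1) = s(2) = 1` and the three-term recurrence
`3(2n-1) s(n) = (n+1) s(n+1) + (n-2) s(n-1)` for all `n ≥ 2`. -/
theorem schroeder_three_term_recurrence :
    schS 1 = 1 ∧ schS 2 = 1 ∧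
    ∀ n : ℕ, 2 ≤ n →
      (3 * (2 * (n : ℤ) - 1) * schS n : ℤ) =
        ((n : ℤ) + 1) * schS (n + 1) + ((n : ℤ) - 2) * schS (n - 1) := by
  have hode : d⁄dX ℤ treeSeries - C 6 * (X * d⁄dX ℤ treeSeries) + X * (X * d⁄dX ℤ treeSeries)
      = X * treeSeries - C 3 * treeSeries + 1 - X := by
    simp only [map_ofNat]
    linear_combination treeSeries_ode
  have h0 := congrArg (coeff 0) hode
  have h1 := congrArg (coeff 1) hode
  simp only [map_add, map_sub, coeff_C_mul, coeff_zero_X_mul, coeff_derivative, coeff_treeSeries,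
    coeff_one, coeff_X, schS_zero] at h0
  rw [show (1 : ℕ) = 0 + 1 from rfl] at h1
  simp only [map_add, map_sub, coeff_C_mul, coeff_succ_X_mul, coeff_zero_X_mul, coeff_derivative,
    coeff_treeSeries, coeff_one, coeff_X, schS_zero] at h1
  norm_num at h0 h1
  refine ⟨by omega, by omega, fun n hn => ?_⟩
  obtain ⟨m, rfl⟩ := Nat.exists_eq_add_of_le' hn
  have h := congrArg (coeff (m + 1 + 1)) hode
  simp only [map_add, map_sub, coeff_C_mul, coeff_succ_X_mul, coeff_derivative,
    coeff_treeSeries, coeff_one, coeff_X] at h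
  norm_num at h
  rw [show m + 2 - 1 = m + 1 from rfl]
  push_cast
  linear_combination -h
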